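/- arXiv:1905.12184 — 3 statements merged into one kernel-verified Lean document; each statement's English description precedes it below -/
import Mathlib

section
/- The matrices satisfy R₁^p = R₂^p = R₃^p = I and J³ = I, and moreover R₂ = J·R₁·J⁻¹ and R₃ = J·R₂·J⁻¹. -/
/-!
`R1 p t` has the form `1 + N` with `N` supported in its first row and `N² = (q - 1) N`, where
`q = η²`; hence `(1 + N)ⁿ = 1 + (1 + q + ⋯ + qⁿ⁻¹) N`. As `q = exp(2πi/p)` is a primitive `p`-th
root of unity and `p > 1`, the geometric sum vanishes for `n = p`, so `R1 p t ^ p = 1`. The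
matrix `Jmat` is the cyclic permutation matrix of order three, and conjugating by it permutes rows
and columns cyclically, which takes `R1` to `R2` and `R2` to `R3`; the relations for `R2` and `R3`
follow from the one for `R1`.
-/

noncomputable section

open Matrix

/-- η = exp(iπ/p) -/
def eta (p : ℕ) : ℂ := Complex.exp (Real.pi * Complex.I / p)
/-- η̄ = exp(−iπ/p) -/
def etab (p : ℕ) : ℂ := Complex.exp (-(Real.pi * Complex.I / p))
/-- φ = exp(iπt/3) -/
def phi (t : ℝ) : ℂ := Complex.exp (Real.pi * Complex.I * t / 3)
/-- φ̄ = exp(−iπt/3) -/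
def phib (t : ℝ) : ℂ := Complex.exp (-(Real.pi * Complex.I * t / 3))
/-- α = 1/(2 sin(π/p)) -/
def alpha (p : ℕ) : ℂ := 1 / (2 * Real.sin (Real.pi / p))

def R1 (p : ℕ) (t : ℝ) : Matrix (Fin 3) (Fin 3) ℂ :=
  !![eta p ^ 2, -Complex.I * eta p * phib t, -Complex.I * eta p * phi t;
     0, 1, 0;
     0, 0, 1]

def R2 (p : ℕ) (t : ℝ) : Matrix (Fin 3) (Fin 3) ℂ :=
  !![1, 0, 0;
     -Complex.I * eta p * phi t, eta p ^ 2, -Complex.I * eta p * phib t;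
     0, 0, 1]

def R3 (p : ℕ) (t : ℝ) : Matrix (Fin 3) (Fin 3) ℂ :=
  !![1, 0, 0;
     0, 1, 0;
     -Complex.I * eta p * phib t, -Complex.I * eta p * phi t, eta p ^ 2]

def Jmat : Matrix (Fin 3) (Fin 3) ℂ :=
  !![0, 0, 1;
     1, 0, 0;
     0, 1, 0]

def Hmat (p : ℕ) (t : ℝ) : Matrix (Fin 3) (Fin 3) ℂ :=
  !![1, -alpha p * phi t, -alpha p * phib t;
     -alpha p * phib t, 1, -alpha p * phi t;
     -alpha p * phi t, -alpha p * phib t, 1]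

/-- The Hermitian form ⟨x,y⟩ = xᵀ·H·ȳ. -/
def form (p : ℕ) (t : ℝ) (x y : Fin 3 → ℂ) : ℂ :=
  dotProduct x ((Hmat p t).mulVec (fun i => starRingEnd ℂ (y i)))

theorem reflection_pow (q b c : ℂ) (n : ℕ) :
    (!![q, b, c; 0, 1, 0; 0, 0, 1] : Matrix (Fin 3) (Fin 3) ℂ) ^ n =
      !![q ^ n, b * ∑ i ∈ Finset.range n, q ^ i, c * ∑ i ∈ Finset.range n, q ^ i;
         0, 1, 0; 0, 0, 1] := by
  induction n with
  | zero => ext i j; fin_cases i <;> fin_cases j <;> simp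
  | succ n ih =>
    rw [pow_succ, ih]
    ext i j
    fin_cases i <;> fin_cases j <;>
      simp [Matrix.mul_apply, Fin.sum_univ_three, Finset.sum_range_succ] <;> ring

theorem eta_sq_isPrimitiveRoot (p : ℕ) (hp : p ≠ 0) : IsPrimitiveRoot (eta p ^ 2) p := by
  have h : eta p ^ 2 = Complex.exp (2 * Real.pi * Complex.I / p) := by
    rw [eta, ← Complex.exp_nat_mul]
    congr 1
    push_cast
    ring
  rw [h]
  exact Complex.isPrimitiveRoot_exp p hp

theorem R1_pow (p : ℕ) (hp : 1 < p) (t : ℝ) : R1 p t ^ p = 1 := by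
  have h := eta_sq_isPrimitiveRoot p (by omega)
  rw [R1, reflection_pow, h.geom_sum_eq_zero hp, h.pow_eq_one]
  ext i j
  fin_cases i <;> fin_cases j <;> simp

theorem Jmat_cube : Jmat ^ 3 = 1 := by
  ext i j
  fin_cases i <;> fin_cases j <;>
    simp [Jmat, pow_succ, Matrix.mul_apply, Fin.sum_univ_three]

theorem isUnit_det_Jmat : IsUnit Jmat.det := by
  simp [Jmat, Matrix.det_fin_three]

theorem R2_eq_conj (p : ℕ) (t : ℝ) : R2 p t = Jmat * R1 p t * Jmat⁻¹ := by
  have h : R2 p t * Jmat = Jmat * R1 p t := by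
    ext i j
    fin_cases i <;> fin_cases j <;>
      simp [Jmat, R1, R2, Matrix.mul_apply, Fin.sum_univ_three]
  rw [← h, Matrix.mul_nonsing_inv_cancel_right _ _ isUnit_det_Jmat]

theorem R3_eq_conj (p : ℕ) (t : ℝ) : R3 p t = Jmat * R2 p t * Jmat⁻¹ := by
  have h : R3 p t * Jmat = Jmat * R2 p t := by
    ext i j
    fin_cases i <;> fin_cases j <;>
      simp [Jmat, R2, R3, Matrix.mul_apply, Fin.sum_univ_three]
  rw [← h, Matrix.mul_nonsing_inv_cancel_right _ _ isUnit_det_Jmat]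

theorem conj_Jmat_pow {A : Matrix (Fin 3) (Fin 3) ℂ} {n : ℕ} (hA : A ^ n = 1) :
    (Jmat * A * Jmat⁻¹) ^ n = 1 := by
  have hJ : Jmat⁻¹ * Jmat = 1 := Matrix.nonsing_inv_mul _ isUnit_det_Jmat
  have h : SemiconjBy Jmat A (Jmat * A * Jmat⁻¹) := by
    rw [SemiconjBy, mul_assoc (Jmat * A), hJ, mul_one]
  have h' := (h.pow_right n).eq
  rw [hA, mul_one] at h'
  calc _ = (Jmat * A * Jmat⁻¹) ^ n * Jmat * Jmat⁻¹ :=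
        (Matrix.mul_nonsing_inv_cancel_right _ _ isUnit_det_Jmat).symm
    _ = 1 := by rw [← h', Matrix.mul_nonsing_inv _ isUnit_det_Jmat]

/-- R₁ᵖ = R₂ᵖ = R₃ᵖ = I, J³ = I, R₂ = J·R₁·J⁻¹ and R₃ = J·R₂·J⁻¹. -/
theorem generators_relations (p : ℕ) (hp : 3 ≤ p) (t : ℝ) :
    R1 p t ^ p = 1 ∧ R2 p t ^ p = 1 ∧ R3 p t ^ p = 1 ∧ Jmat ^ 3 = 1 ∧
    R2 p t = Jmat * R1 p t * Jmat⁻¹ ∧ R3 p t = Jmat * R2 p t * Jmat⁻¹ := by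
  have h1 := R1_pow p (by omega) t
  have h2 : R2 p t ^ p = 1 := by rw [R2_eq_conj]; exact conj_Jmat_pow h1
  have h3 : R3 p t ^ p = 1 := by rw [R3_eq_conj]; exact conj_Jmat_pow h2
  exact ⟨h1, h2, h3, Jmat_cube, R2_eq_conj p t, R3_eq_conj p t⟩
end
end

section
/- For z ∈ ℂ let w(z) = (z, iη̄φ̄, 1)ᵀ ∈ ℂ³. Then ⟨w(z), v₃₁₂⟩ = 0 for every z ∈ ℂ; moreover R₁·w(z) = w(η²·z + φ̄² − iηφ) for every z ∈ ℂ, and (R₃·J)·w(z) = (−iηφz)·w(iη̄φ̄/z) for every z ≠ 0. -/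
/-!
The vector `v312` is polar to the complex line spanned by the `w z`, and every claim reduces to
polynomial identities in `η, η̄, φ, φ̄, α` modulo three relations: `η η̄ = 1`, `φ φ̄ = 1`
(`eta_mul_etab`, `phi_mul_phib`), and `i α (η - η̄) = -1` (`alpha_relation`). The last one is
Euler's formula `η - η̄ = 2 i sin (π / p)` combined with `2 α sin (π / p) = 1`, and is needed
only for the orthogonality `⟨w z, v312⟩ = 0`. The actions of `R1` and `R3 * Jmat` on the
`w z` use only the first two relations.
-/

noncomputable section

open Matrix

def v123 (p : ℕ) (t : ℝ) : Fin 3 → ℂ :=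
  ![-Complex.I * eta p * phib t, 1, Complex.I * etab p * phi t]
def v231 (p : ℕ) (t : ℝ) : Fin 3 → ℂ :=
  ![Complex.I * etab p * phi t, -Complex.I * eta p * phib t, 1]
def v312 (p : ℕ) (t : ℝ) : Fin 3 → ℂ :=
  ![1, Complex.I * etab p * phi t, -Complex.I * eta p * phib t]
def v321 (p : ℕ) (t : ℝ) : Fin 3 → ℂ :=
  ![Complex.I * etab p * phib t, 1, -Complex.I * eta p * phi t]
def v132 (p : ℕ) (t : ℝ) : Fin 3 → ℂ :=
  ![-Complex.I * eta p * phi t, Complex.I * etab p * phib t, 1]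
def v213 (p : ℕ) (t : ℝ) : Fin 3 → ℂ :=
  ![1, -Complex.I * eta p * phi t, Complex.I * etab p * phib t]

lemma eta_mul_etab (p : ℕ) : eta p * etab p = 1 := by
  rw [eta, etab, ← Complex.exp_add, add_neg_cancel, Complex.exp_zero]

lemma phi_mul_phib (t : ℝ) : phi t * phib t = 1 := by
  rw [phi, phib, ← Complex.exp_add, add_neg_cancel, Complex.exp_zero]

lemma conj_eta (p : ℕ) : starRingEnd ℂ (eta p) = etab p := by
  simp [eta, etab, ← Complex.exp_conj, neg_div]

lemma conj_etab (p : ℕ) : starRingEnd ℂ (etab p) = eta p := by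
  rw [← conj_eta, Complex.conj_conj]

lemma conj_phi (t : ℝ) : starRingEnd ℂ (phi t) = phib t := by
  simp [phi, phib, ← Complex.exp_conj, neg_div, map_ofNat (starRingEnd ℂ)]

lemma conj_phib (t : ℝ) : starRingEnd ℂ (phib t) = phi t := by
  rw [← conj_phi, Complex.conj_conj]

/-- Euler's formula `η - η̄ = 2 i sin (π / p)` multiplied by `i α`, where
`2 α sin (π / p) = 1` because `sin (π / p) ≠ 0`. -/
lemma alpha_relation (p : ℕ) (hp : 3 ≤ p) :
    Complex.I * alpha p * (eta p - etab p) = -1 := by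
  have hp' : (3 : ℝ) ≤ p := by exact_mod_cast hp
  have hsin : Real.sin (Real.pi / p) ≠ 0 := by
    refine (Real.sin_pos_of_pos_of_lt_pi (by positivity) ?_).ne'
    exact div_lt_self Real.pi_pos (by linarith)
  have hsin' : (Real.sin (Real.pi / p) : ℂ) ≠ 0 := by exact_mod_cast hsin
  have heuler : eta p - etab p = 2 * Complex.I * (Real.sin (Real.pi / p) : ℂ) := by
    have h1 : (Real.pi * Complex.I / p : ℂ) = ((Real.pi / p : ℝ) : ℂ) * Complex.I := by
      push_cast; ring
    rw [eta, etab, h1, ← neg_mul, Complex.exp_mul_I, Complex.exp_mul_I, Complex.cos_neg,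
      Complex.sin_neg, Complex.ofReal_sin]
    ring
  rw [heuler, alpha]
  field_simp
  exact Complex.I_sq

/-- For w(z) = (z, iη̄φ̄, 1)ᵀ: ⟨w(z), v₃₁₂⟩ = 0 for all z;
R₁·w(z) = w(η²z + φ̄² − iηφ); and (R₃·J)·w(z) = (−iηφz)·w(iη̄φ̄/z) for z ≠ 0. -/
theorem action_on_line_v312 (p : ℕ) (hp : 3 ≤ p) (t : ℝ) :
    let w : ℂ → (Fin 3 → ℂ) := fun z => ![z, Complex.I * etab p * phib t, 1]
    (∀ z : ℂ, form p t (w z) (v312 p t) = 0) ∧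
    (∀ z : ℂ, (R1 p t).mulVec (w z) =
      w (eta p ^ 2 * z + phib t ^ 2 - Complex.I * eta p * phi t)) ∧
    (∀ z : ℂ, z ≠ 0 → (R3 p t * Jmat).mulVec (w z) =
      (-Complex.I * eta p * phi t * z) • w (Complex.I * etab p * phib t / z)) := by
  intro w
  have hη := eta_mul_etab p
  have hφ := phi_mul_phib t
  have hα := alpha_relation p hp
  have hI := Complex.I_mul_I
  refine ⟨fun z => ?_, fun z => ?_, fun z hz => ?_⟩
  · simp only [w, form, v312, Hmat, dotProduct, mulVec, Fin.sum_univ_three, of_apply, cons_val,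
      map_mul, map_neg, map_one, Complex.conj_I, conj_eta, conj_etab, conj_phi]
    simp only [conj_phib]
    -- The pairing is `z (1 + c) + φ̄² (1 + c) + i η̄ φ (1 + c)` with `c = i α (η - η̄) = -1`, modulo
    -- `η η̄ = 1` and `φ φ̄ = 1`: an ideal membership in six indeterminates.
    generalize eta p = e at *
    generalize etab p = e' at *
    generalize phi t = f at *
    generalize phib t = f' at *
    generalize alpha p = a at *
    generalize Complex.I = i at *
    grind
  · ext k
    fin_cases k <;> simp [w, R1, mulVec, dotProduct, Fin.sum_univ_three]
    linear_combination (-Complex.I ^ 2 * phib t ^ 2) * hη - phib t ^ 2 * hI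
  · have hscale : (-Complex.I * eta p * phi t) * (Complex.I * etab p * phib t) = 1 := by
      linear_combination (-Complex.I ^ 2 * phi t * phib t) * hη - Complex.I ^ 2 * hφ - hI
    -- `Jmat` permutes the coordinates of `w z` before `R3` acts;
    -- the third coordinate of the image then loses its constant term, since `η² η̄ = η`.
    rw [← mulVec_mulVec]
    have hJ : Jmat *ᵥ w z = ![1, z, Complex.I * etab p * phib t] := by
      ext k
      fin_cases k <;> simp [w, Jmat, mulVec, dotProduct, Fin.sum_univ_three]
    rw [hJ]
    ext k
    fin_cases k <;> simp [w, R3, mulVec, dotProduct, Fin.sum_univ_three]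
    · field_simp
      linear_combination -hscale
    · linear_combination -z * hscale
    · linear_combination (Complex.I * eta p * phib t) * hη
end
end

section
/- The matrix identities J·R₂·R₁ = (R₃·J)·R₁ and J·R₃·R₂ = R₁·(R₃·J) hold; consequently, the subgroup K is contained in the subgroup of GL(3,ℂ) generated by {R₁, R₃·J, J⁻¹·R₁·R₂, J·R₁·R₃}. -/
/-!
The cyclic permutation matrix `J` permutes the three reflections by conjugation; in particular
`J R₂ = R₃ J` and `J R₃ = R₁ J`. Hence `J R₂ R₁ = (R₃ J) R₁` and
`J R₃ R₂ = R₁ J R₂ = R₁ (R₃ J)`, so each generator of `K` is either one of the generators of the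
larger group or a product of two of them.
-/

noncomputable section

open Matrix

/-- Conjugation by the cyclic permutation `J` carries the complex reflection `R₂` to `R₃`. -/
lemma Jmat_mul_R2 (p : ℕ) (t : ℝ) : Jmat * R2 p t = R3 p t * Jmat := by
  ext i j
  fin_cases i <;> fin_cases j <;>
    simp [Jmat, R2, R3, Matrix.mul_apply, Fin.sum_univ_three]

/-- Conjugation by the cyclic permutation `J` carries the complex reflection `R₃` to `R₁`. -/
lemma Jmat_mul_R3 (p : ℕ) (t : ℝ) : Jmat * R3 p t = R1 p t * Jmat := by
  ext i j
  fin_cases i <;> fin_cases j <;>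
    simp [Jmat, R1, R3, Matrix.mul_apply, Fin.sum_univ_three]

/-- The identities J·R₂·R₁ = (R₃·J)·R₁ and J·R₃·R₂ = R₁·(R₃·J) hold; consequently
K = ⟨J·R₁·R₃, J·R₂·R₁, J·R₃·R₂⟩ is contained in ⟨R₁, R₃·J, J⁻¹·R₁·R₂, J·R₁·R₃⟩. -/
theorem K_contained_in_hybrid (p : ℕ) (hp : 3 ≤ p) (t : ℝ)
    (R1' R2' R3' J' : GL (Fin 3) ℂ)
    (hR1 : (R1' : Matrix (Fin 3) (Fin 3) ℂ) = R1 p t)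
    (hR2 : (R2' : Matrix (Fin 3) (Fin 3) ℂ) = R2 p t)
    (hR3 : (R3' : Matrix (Fin 3) (Fin 3) ℂ) = R3 p t)
    (hJ : (J' : Matrix (Fin 3) (Fin 3) ℂ) = Jmat) :
    Jmat * R2 p t * R1 p t = (R3 p t * Jmat) * R1 p t ∧
    Jmat * R3 p t * R2 p t = R1 p t * (R3 p t * Jmat) ∧
    Subgroup.closure {J' * R1' * R3', J' * R2' * R1', J' * R3' * R2'} ≤
      Subgroup.closure {R1', R3' * J', J'⁻¹ * R1' * R2', J' * R1' * R3'} := by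
  have h1 : Jmat * R2 p t * R1 p t = (R3 p t * Jmat) * R1 p t := by rw [Jmat_mul_R2]
  have h2 : Jmat * R3 p t * R2 p t = R1 p t * (R3 p t * Jmat) := by
    rw [Jmat_mul_R3, Matrix.mul_assoc, Jmat_mul_R2]
  have g1 : J' * R2' * R1' = (R3' * J') * R1' :=
    Units.ext (by simpa only [Units.val_mul, hR1, hR2, hR3, hJ] using h1)
  have g2 : J' * R3' * R2' = R1' * (R3' * J') :=
    Units.ext (by simpa only [Units.val_mul, hR1, hR2, hR3, hJ] using h2)
  refine ⟨h1, h2, (Subgroup.closure_le _).2 ?_⟩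
  have m1 : R1' ∈ Subgroup.closure {R1', R3' * J', J'⁻¹ * R1' * R2', J' * R1' * R3'} :=
    Subgroup.subset_closure (by simp)
  have m2 : R3' * J' ∈ Subgroup.closure {R1', R3' * J', J'⁻¹ * R1' * R2', J' * R1' * R3'} :=
    Subgroup.subset_closure (by simp)
  rintro x (rfl | rfl | rfl)
  · exact Subgroup.subset_closure (by simp)
  · rw [g1]
    exact mul_mem m2 m1
  · rw [g2]
    exact mul_mem m1 m2
end
end
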